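/- arXiv:2507.09846 — 8 statements merged into one kernel-verified Lean document; each statement's English description precedes it below -/
import Mathlib

section
/- Consider the SF iteration with arbitrary update directions Δ_t ∈ ℝⁿ, learning rate γ > 0, momentum β ∈ [0,1), and coefficients c_t. Define the momentum variable m_t := (x_t - z_{t+1})/γ for t ≥ 1 and m₀ := 0. Then for every t ≥ 1: (i) m_t = (1 - c_t) m_{t-1} + Δ_t, and (ii) y_{t+1} = y_t - γ[β c_{t+1} m_t + (1-β) Δ_t]. That is, the SF iteration is equivalent to a momentum-based optimizer update on the y_t iterates. -/
/-!
STATEMENT 4: Reformulation of the Schedule-Free iteration as a momentum-based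
update on the y_t iterates. With m_t := (x_t - z_{t+1})/γ and m₀ := 0, we have
(i)  m_t = (1 - c_t) m_{t-1} + Δ_t, and
(ii) y_{t+1} = y_t - γ [β c_{t+1} m_t + (1-β) Δ_t], for every t ≥ 1.
-/

theorem sf_momentum_reformulation
    {n : ℕ} (Δ : ℕ → Fin n → ℝ)
    (γ β : ℝ) (hγ : 0 < γ) (hβ : β ∈ Set.Ico (0 : ℝ) 1)
    (c : ℕ → ℝ) (hc : ∀ t : ℕ, 1 ≤ t → c t ∈ Set.Ioc (0 : ℝ) 1) (hc1 : c 1 = 1)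
    (x y z : ℕ → Fin n → ℝ)
    (hz1 : z 1 = x 1)
    (hy : ∀ t : ℕ, 1 ≤ t → y t = (1 - β) • z t + β • x t)
    (hz : ∀ t : ℕ, 1 ≤ t → z (t + 1) = z t - γ • Δ t)
    (hx : ∀ t : ℕ, 1 ≤ t →
      x (t + 1) = (1 - c (t + 1)) • x t + c (t + 1) • z (t + 1))
    -- the momentum variable m_t = (x_t - z_{t+1})/γ, with m₀ = 0
    (m : ℕ → Fin n → ℝ)
    (hm0 : m 0 = 0)
    (hm : ∀ t : ℕ, 1 ≤ t → m t = γ⁻¹ • (x t - z (t + 1))) :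
    ∀ t : ℕ, 1 ≤ t →
      m t = (1 - c t) • m (t - 1) + Δ t ∧
      y (t + 1) = y t - γ • ((β * c (t + 1)) • m t + (1 - β) • Δ t) := by
  have hg : γ ≠ 0 := hγ.ne'
  intro t ht
  constructor
  · obtain ⟨k, rfl⟩ : ∃ k, t = k + 1 := ⟨t - 1, by omega⟩
    rw [hm _ ht, hz _ ht]
    rcases Nat.eq_zero_or_pos k with rfl | hk
    · ext i
      simp [hm0, hz1, hg]
    · rw [Nat.add_sub_cancel, hm k hk, hx k hk]
      ext i
      simp only [Pi.add_apply, Pi.sub_apply, Pi.smul_apply, smul_eq_mul]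
      field_simp
      ring
  · rw [hy _ (by omega), hy t ht, hx t ht, hm t ht, hz t ht]
    ext i
    simp only [Pi.add_apply, Pi.sub_apply, Pi.smul_apply, smul_eq_mul]
    field_simp
    ring
end

section
/- Consider the SF iteration with arbitrary update directions Δ_t ∈ ℝⁿ, learning rate γ > 0, momentum β ∈ [0,1), and coefficients c_t ∈ (0,1]. Then for every t ≥ 1, the averaged iterate satisfies x_{t+1} = [(1 - c_{t+1})(1-β) x_t + c_{t+1} y_{t+1}] / [(1 - c_{t+1})(1-β) + c_{t+1}]; in particular, x_{t+1} is a convex combination of x_t and y_{t+1}. -/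
/-!
STATEMENT 5: The SF averaged iterate satisfies
x_{t+1} = [(1 - c_{t+1})(1-β) x_t + c_{t+1} y_{t+1}] / [(1 - c_{t+1})(1-β) + c_{t+1}];
in particular, x_{t+1} is a convex combination of x_t and y_{t+1}.
-/

theorem sf_x_convex_combination_of_y
    {n : ℕ} (Δ : ℕ → Fin n → ℝ)
    (γ β : ℝ) (hγ : 0 < γ) (hβ : β ∈ Set.Ico (0 : ℝ) 1)
    (c : ℕ → ℝ) (hc : ∀ t : ℕ, 1 ≤ t → c t ∈ Set.Ioc (0 : ℝ) 1) (hc1 : c 1 = 1)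
    (x y z : ℕ → Fin n → ℝ)
    (hz1 : z 1 = x 1)
    (hy : ∀ t : ℕ, 1 ≤ t → y t = (1 - β) • z t + β • x t)
    (hz : ∀ t : ℕ, 1 ≤ t → z (t + 1) = z t - γ • Δ t)
    (hx : ∀ t : ℕ, 1 ≤ t →
      x (t + 1) = (1 - c (t + 1)) • x t + c (t + 1) • z (t + 1)) :
    ∀ t : ℕ, 1 ≤ t →
      x (t + 1) =
        (((1 - c (t + 1)) * (1 - β)) / ((1 - c (t + 1)) * (1 - β) + c (t + 1))) • x t
        + (c (t + 1) / ((1 - c (t + 1)) * (1 - β) + c (t + 1))) • y (t + 1) ∧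
      0 ≤ ((1 - c (t + 1)) * (1 - β)) / ((1 - c (t + 1)) * (1 - β) + c (t + 1)) ∧
      0 ≤ c (t + 1) / ((1 - c (t + 1)) * (1 - β) + c (t + 1)) ∧
      ((1 - c (t + 1)) * (1 - β)) / ((1 - c (t + 1)) * (1 - β) + c (t + 1))
        + c (t + 1) / ((1 - c (t + 1)) * (1 - β) + c (t + 1)) = 1 := by
  intro t ht
  obtain ⟨hc0, hcle⟩ := hc (t + 1) (by omega)
  obtain ⟨hβ0, hβ1⟩ := hβ
  have hA : 0 ≤ (1 - c (t + 1)) * (1 - β) :=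
    mul_nonneg (by linarith) (by linarith)
  have hD : 0 < (1 - c (t + 1)) * (1 - β) + c (t + 1) := by linarith
  refine ⟨?_, div_nonneg hA hD.le, div_nonneg hc0.le hD.le, ?_⟩
  · funext i
    have h1 := congrFun (hx t ht) i
    have h2 := congrFun (hy (t + 1) (by omega)) i
    simp only [Pi.add_apply, Pi.smul_apply, smul_eq_mul] at h1 h2 ⊢
    rw [div_mul_eq_mul_div, div_mul_eq_mul_div, ← add_div, eq_div_iff hD.ne', h2]
    linear_combination (1 - β) * h1
  · rw [← add_div, div_self hD.ne']
end

section
/- Consider the SF iteration with arbitrary update directions Δ_t ∈ ℝⁿ, learning rate γ > 0, momentum β ∈ [0,1), and coefficients c_t ∈ (0,1] with c₁ = 1. For 1 ≤ t ≤ T define the weights α_t := [c_t / ((1-c_t)(1-β) + c_t)] · ∏_{s=t+1}^{T} [(1-c_s)(1-β) / ((1-c_s)(1-β) + c_s)]. Then for every T ≥ 1, x_T = Σ_{t=1}^{T} α_t y_t; that is, the SF averaged iterate x_T is an implicit weighted average of the past momentum iterates y₁, ..., y_T. -/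
/-!
STATEMENT 6: The SF averaged iterate x_T is an implicit weighted average of the
past momentum iterates y₁, ..., y_T:
x_T = Σ_{t=1}^T α_t y_t, where
α_t = [c_t / ((1-c_t)(1-β) + c_t)] · ∏_{s=t+1}^T [(1-c_s)(1-β) / ((1-c_s)(1-β) + c_s)].
-/

theorem sf_x_is_weighted_average_of_y
    {n : ℕ} (Δ : ℕ → Fin n → ℝ)
    (γ β : ℝ) (hγ : 0 < γ) (hβ : β ∈ Set.Ico (0 : ℝ) 1)
    (c : ℕ → ℝ) (hc : ∀ t : ℕ, 1 ≤ t → c t ∈ Set.Ioc (0 : ℝ) 1) (hc1 : c 1 = 1)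
    (x y z : ℕ → Fin n → ℝ)
    (hz1 : z 1 = x 1)
    (hy : ∀ t : ℕ, 1 ≤ t → y t = (1 - β) • z t + β • x t)
    (hz : ∀ t : ℕ, 1 ≤ t → z (t + 1) = z t - γ • Δ t)
    (hx : ∀ t : ℕ, 1 ≤ t →
      x (t + 1) = (1 - c (t + 1)) • x t + c (t + 1) • z (t + 1))
    -- α T t : the implicit averaging weight of y_t in x_T
    (α : ℕ → ℕ → ℝ)
    (hα : ∀ T t : ℕ, α T t =
      (c t / ((1 - c t) * (1 - β) + c t)) *
        ∏ s ∈ Finset.Icc (t + 1) T,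
          ((1 - c s) * (1 - β) / ((1 - c s) * (1 - β) + c s))) :
    ∀ T : ℕ, 1 ≤ T → x T = ∑ t ∈ Finset.Icc 1 T, α T t • y t := by
  intro T hT
  induction T, hT using Nat.le_induction with
  | base =>
    rw [Finset.Icc_self, Finset.sum_singleton, hα, hy 1 le_rfl, hz1, hc1]
    ext i
    simp
    ring
  | succ T hT ih =>
    have hc' := hc (T + 1) (by omega)
    have hD : (1 - c (T + 1)) * (1 - β) + c (T + 1) ≠ 0 := by
      have h1 : 0 ≤ (1 - c (T + 1)) * (1 - β) :=
        mul_nonneg (by linarith [hc'.2]) (by linarith [hβ.2])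
      have h2 := hc'.1
      positivity
    have hstep : ∀ t ∈ Finset.Icc 1 T, α (T + 1) t • y t =
        ((1 - c (T + 1)) * (1 - β) / ((1 - c (T + 1)) * (1 - β) + c (T + 1))) •
          (α T t • y t) := by
      intro t ht
      rw [Finset.mem_Icc] at ht
      rw [smul_smul, hα (T + 1) t, hα T t, Finset.prod_Icc_succ_top (by omega)]
      congr 1
      ring
    rw [Finset.sum_Icc_succ_top (by omega), Finset.sum_congr rfl hstep, ← Finset.smul_sum, ← ih,
      hα (T + 1) (T + 1), Finset.Icc_eq_empty (by omega), Finset.prod_empty, mul_one,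
      hy (T + 1) (by omega), hx T hT]
    ext i
    simp only [Pi.add_apply, Pi.smul_apply, smul_eq_mul]
    field_simp
    ring
end

section
/- Run SF-GD on the quadratic f(w) = (1/2) wᵀHw + gᵀw + c (H real symmetric) with learning rate γ > 0, momentum β ∈ [0,1), and coefficients c_t ∈ (0,1]. Let (q, a) be an eigenvector/eigenvalue pair of H with a ≠ 0, and define the scalar sequence x̃_t := qᵀx_t + (1/a) qᵀg. Then for every t ≥ 2, x̃_{t+1} = [1 + c_{t+1}/c_t - c_{t+1} - γ c_{t+1}((1-β)/c_t + β) a] x̃_t + [c_{t+1} - c_{t+1}/c_t][1 - γ(1-β)a] x̃_{t-1}; that is, the projection of the SF-GD trajectory onto an eigendirection of H obeys a linear time-varying second-order recurrence. -/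
/-!
STATEMENT 8: Projection of the SF-GD trajectory onto an eigendirection of H
obeys a linear time-varying second-order recurrence: with (q, a) an
eigenvector/eigenvalue pair of H (a ≠ 0) and x̃_t := qᵀx_t + (1/a) qᵀg,
for every t ≥ 2,
x̃_{t+1} = [1 + c_{t+1}/c_t - c_{t+1} - γ c_{t+1}((1-β)/c_t + β) a] x̃_t
         + [c_{t+1} - c_{t+1}/c_t][1 - γ(1-β)a] x̃_{t-1}.
-/

open Matrix

theorem sfgd_eigendirection_recurrence
    {n : ℕ} (H : Matrix (Fin n) (Fin n) ℝ) (hH : H.IsSymm)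
    (g : Fin n → ℝ) (c₀ : ℝ)
    (f : (Fin n → ℝ) → ℝ)
    (hf : ∀ w, f w = (1 / 2) * (w ⬝ᵥ H.mulVec w) + g ⬝ᵥ w + c₀)
    (γ β : ℝ) (hγ : 0 < γ) (hβ : β ∈ Set.Ico (0 : ℝ) 1)
    (c : ℕ → ℝ) (hc : ∀ t : ℕ, 1 ≤ t → c t ∈ Set.Ioc (0 : ℝ) 1) (hc1 : c 1 = 1)
    (x y z : ℕ → Fin n → ℝ)
    (hz1 : z 1 = x 1)
    (hy : ∀ t : ℕ, 1 ≤ t → y t = (1 - β) • z t + β • x t)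
    -- SF-GD: Δ_t = ∇f(y_t) = H y_t + g
    (hz : ∀ t : ℕ, 1 ≤ t → z (t + 1) = z t - γ • (H.mulVec (y t) + g))
    (hx : ∀ t : ℕ, 1 ≤ t →
      x (t + 1) = (1 - c (t + 1)) • x t + c (t + 1) • z (t + 1))
    -- (q, a): an eigenvector/eigenvalue pair of H with a ≠ 0
    (q : Fin n → ℝ) (a : ℝ) (hq : q ≠ 0) (ha : a ≠ 0)
    (heig : H.mulVec q = a • q)
    -- the projected scalar sequence x̃_t = qᵀ x_t + (1/a) qᵀ g
    (xtil : ℕ → ℝ)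
    (hxtil : ∀ t : ℕ, xtil t = q ⬝ᵥ x t + (1 / a) * (q ⬝ᵥ g)) :
    ∀ t : ℕ, 2 ≤ t →
      xtil (t + 1) =
        (1 + c (t + 1) / c t - c (t + 1)
          - γ * c (t + 1) * ((1 - β) / c t + β) * a) * xtil t
        + (c (t + 1) - c (t + 1) / c t) * (1 - γ * (1 - β) * a) * xtil (t - 1) := by
  intro t ht
  obtain ⟨s, rfl⟩ : ∃ s, t = s + 1 := ⟨t - 1, by omega⟩
  have hs : 1 ≤ s := by omega
  have hc0 : c (s + 1) ≠ 0 := ne_of_gt (hc (s + 1) (by omega)).1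
  have hHq : ∀ v : Fin n → ℝ, q ⬝ᵥ H.mulVec v = a * (q ⬝ᵥ v) := by
    intro v
    rw [Matrix.dotProduct_mulVec, ← Matrix.mulVec_transpose, hH.eq, heig, smul_dotProduct,
      smul_eq_mul]
  have h1 : q ⬝ᵥ x (s + 1) = (1 - c (s + 1)) * (q ⬝ᵥ x s) + c (s + 1) * (q ⬝ᵥ z (s + 1)) := by
    rw [hx s hs, dotProduct_add, dotProduct_smul, dotProduct_smul, smul_eq_mul, smul_eq_mul]
  have h2 : q ⬝ᵥ x (s + 1 + 1) = (1 - c (s + 1 + 1)) * (q ⬝ᵥ x (s + 1))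
      + c (s + 1 + 1) * (q ⬝ᵥ z (s + 1 + 1)) := by
    rw [hx (s + 1) (by omega), dotProduct_add, dotProduct_smul, dotProduct_smul, smul_eq_mul,
      smul_eq_mul]
  have h3 : q ⬝ᵥ z (s + 1 + 1) = q ⬝ᵥ z (s + 1)
      - γ * (a * ((1 - β) * (q ⬝ᵥ z (s + 1)) + β * (q ⬝ᵥ x (s + 1))) + q ⬝ᵥ g) := by
    rw [hz (s + 1) (by omega), dotProduct_sub, dotProduct_smul, dotProduct_add, hHq,
      hy (s + 1) (by omega), dotProduct_add, dotProduct_smul, dotProduct_smul]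
    simp only [smul_eq_mul]
  rw [Nat.add_sub_cancel, hxtil, hxtil, hxtil, h2, h3, h1]
  field_simp
  ring
end

section
/- Let S > 0, γ > 0, β₁ ∈ [0,1), β₂ ∈ (0,1), and let g, n ∈ ℝⁿ. Set ν := ((1-β₁)γS/2)² (so that S/√ν = 2/((1-β₁)γ)) and define σ² := [⟨n, -g⟩ + ((1-β₂)/β₂)(S²/4 - ‖g‖²/((1-β₁)²γ²))] / [(1/2)‖n‖² + ((1-β₂)/((1-β₁)²β₂γ²))S²]. Then the denominator is strictly positive and σ² is the unique real number satisfying the stationarity equation (1/√ν)⟨n, -(γ(1-β₁)/√ν)(g + (σ²/2) n)⟩ - (S/(2ν^{3/2})) · ((1-β₂)/β₂)(‖g‖² + σ² S² - ν) = 0. -/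
/-!
STATEMENT 13: Equilibrium oscillation variance of the central flow of
Schedule-Free Scalar Adam at the Edge of Stability. With
ν := ((1-β₁)γS/2)² (so S/√ν = 2/((1-β₁)γ)) and
σ² := [⟨n,-g⟩ + ((1-β₂)/β₂)(S²/4 - ‖g‖²/((1-β₁)²γ²))]
      / [(1/2)‖n‖² + ((1-β₂)/((1-β₁)²β₂γ²))S²],
the denominator is strictly positive and σ² is the unique real number satisfying
(1/√ν)⟨n, -(γ(1-β₁)/√ν)(g + (σ²/2) n)⟩
  - (S/(2ν^{3/2})) ((1-β₂)/β₂)(‖g‖² + σ² S² - ν) = 0.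
-/

open RealInnerProductSpace

theorem sf_scalar_adam_central_flow_variance
    {d : ℕ} (S γ β₁ β₂ : ℝ)
    (hS : 0 < S) (hγ : 0 < γ)
    (hβ₁ : β₁ ∈ Set.Ico (0 : ℝ) 1) (hβ₂ : β₂ ∈ Set.Ioo (0 : ℝ) 1)
    (g nv : EuclideanSpace ℝ (Fin d))
    (ν : ℝ) (hν : ν = ((1 - β₁) * γ * S / 2) ^ 2)
    (σsq : ℝ)
    (hσsq : σsq =
      (⟪nv, -g⟫ + ((1 - β₂) / β₂) * (S ^ 2 / 4 - ‖g‖ ^ 2 / ((1 - β₁) ^ 2 * γ ^ 2)))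
      / ((1 / 2) * ‖nv‖ ^ 2 + ((1 - β₂) / ((1 - β₁) ^ 2 * β₂ * γ ^ 2)) * S ^ 2)) :
    (0 < (1 / 2) * ‖nv‖ ^ 2 + ((1 - β₂) / ((1 - β₁) ^ 2 * β₂ * γ ^ 2)) * S ^ 2) ∧
    ((1 / Real.sqrt ν) *
        ⟪nv, -((γ * (1 - β₁) / Real.sqrt ν) • (g + (σsq / 2) • nv))⟫
      - (S / (2 * Real.sqrt ν ^ 3)) * ((1 - β₂) / β₂) *
          (‖g‖ ^ 2 + σsq * S ^ 2 - ν) = 0) ∧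
    (∀ t : ℝ,
      (1 / Real.sqrt ν) *
          ⟪nv, -((γ * (1 - β₁) / Real.sqrt ν) • (g + (t / 2) • nv))⟫
        - (S / (2 * Real.sqrt ν ^ 3)) * ((1 - β₂) / β₂) *
            (‖g‖ ^ 2 + t * S ^ 2 - ν) = 0 → t = σsq) := by
  obtain ⟨_, h1⟩ := hβ₁
  obtain ⟨hb, hb1⟩ := hβ₂
  have ha : 0 < 1 - β₁ := by linarith
  have hc : 0 < 1 - β₂ := by linarith
  have hden : 0 < (1 / 2) * ‖nv‖ ^ 2 + ((1 - β₂) / ((1 - β₁) ^ 2 * β₂ * γ ^ 2)) * S ^ 2 := by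
    positivity
  have hs : Real.sqrt ν = (1 - β₁) * γ * S / 2 := by
    rw [hν]; exact Real.sqrt_sq (by positivity)
  have key : ∀ t : ℝ,
      (1 / Real.sqrt ν) *
          ⟪nv, -((γ * (1 - β₁) / Real.sqrt ν) • (g + (t / 2) • nv))⟫
        - (S / (2 * Real.sqrt ν ^ 3)) * ((1 - β₂) / β₂) *
            (‖g‖ ^ 2 + t * S ^ 2 - ν) =
      (4 / ((1 - β₁) * γ * S ^ 2)) *
      ((⟪nv, -g⟫ + ((1 - β₂) / β₂) * (S ^ 2 / 4 - ‖g‖ ^ 2 / ((1 - β₁) ^ 2 * γ ^ 2)))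
      - t * ((1 / 2) * ‖nv‖ ^ 2 + ((1 - β₂) / ((1 - β₁) ^ 2 * β₂ * γ ^ 2)) * S ^ 2)) := by
    intro t
    rw [hs, hν, inner_neg_right, inner_neg_right, inner_smul_right, inner_add_right,
      inner_smul_right, real_inner_self_eq_norm_sq]
    generalize 1 - β₁ = a at *
    generalize 1 - β₂ = c at *
    field_simp
    ring
  refine ⟨hden, ?_, ?_⟩
  · rw [key, hσsq, div_mul_cancel₀ _ hden.ne', sub_self, mul_zero]
  · intro t ht
    rw [key] at ht
    have h4 : 4 / ((1 - β₁) * γ * S ^ 2) ≠ 0 := by positivity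
    rw [hσsq, eq_div_iff hden.ne']
    have := (mul_eq_zero.mp ht).resolve_left h4
    linarith
end

section
/- Let S > 0, γ > 0, β₂ ∈ (0,1), and let g, n ∈ ℝⁿ with ⟨n, -g⟩ ≥ 0. Define σ²(β₁) := [⟨n, -g⟩ + ((1-β₂)/β₂)(S²/4 - ‖g‖²/((1-β₁)²γ²))] / [(1/2)‖n‖² + ((1-β₂)/((1-β₁)²β₂γ²))S²] for β₁ ∈ [0,1). Then β₁ ↦ σ²(β₁) is strictly decreasing on [0,1); that is, larger momentum β₁ yields a smaller equilibrium oscillation variance along the hill direction for Schedule-Free Scalar Adam at the Edge of Stability. -/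
/-!
STATEMENT 14: The equilibrium oscillation variance
σ²(β₁) = [⟨n,-g⟩ + ((1-β₂)/β₂)(S²/4 - ‖g‖²/((1-β₁)²γ²))]
         / [(1/2)‖n‖² + ((1-β₂)/((1-β₁)²β₂γ²))S²]
of Schedule-Free Scalar Adam at the Edge of Stability is strictly decreasing in
the momentum parameter β₁ on [0,1), provided ⟨n, -g⟩ ≥ 0.
-/

open RealInnerProductSpace

theorem sf_scalar_adam_variance_strictAnti_in_momentum
    {d : ℕ} (S γ β₂ : ℝ)
    (hS : 0 < S) (hγ : 0 < γ) (hβ₂ : β₂ ∈ Set.Ioo (0 : ℝ) 1)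
    (g nv : EuclideanSpace ℝ (Fin d))
    (hng : 0 ≤ ⟪nv, -g⟫)
    (σsq : ℝ → ℝ)
    (hσsq : ∀ β₁ : ℝ, σsq β₁ =
      (⟪nv, -g⟫ + ((1 - β₂) / β₂) * (S ^ 2 / 4 - ‖g‖ ^ 2 / ((1 - β₁) ^ 2 * γ ^ 2)))
      / ((1 / 2) * ‖nv‖ ^ 2 + ((1 - β₂) / ((1 - β₁) ^ 2 * β₂ * γ ^ 2)) * S ^ 2)) :
    StrictAntiOn σsq (Set.Ico (0 : ℝ) 1) := by
  obtain ⟨hb0, hb1⟩ := hβ₂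
  have hk : 0 < (1 - β₂) / β₂ := div_pos (by linarith) hb0
  generalize ⟪nv, -g⟫ = a at hng hσsq
  have hG : 0 ≤ ‖g‖ ^ 2 := by positivity
  have hN : 0 ≤ ‖nv‖ ^ 2 := by positivity
  generalize ‖g‖ ^ 2 = G at hG hσsq
  generalize ‖nv‖ ^ 2 = N at hN hσsq
  have key : ∀ β : ℝ, β < 1 → σsq β =
      (a + ((1 - β₂) / β₂) * (S ^ 2 / 4 - G * (1 / ((1 - β) ^ 2 * γ ^ 2)))) /
      ((1 / 2) * N + ((1 - β₂) / β₂) * (1 / ((1 - β) ^ 2 * γ ^ 2)) * S ^ 2) := by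
    intro β hβ
    have h1 : (1 - β) ≠ 0 := by linarith
    have e1 : (1 - β₂) / ((1 - β) ^ 2 * β₂ * γ ^ 2) =
        ((1 - β₂) / β₂) * (1 / ((1 - β) ^ 2 * γ ^ 2)) := by
      field_simp
    rw [hσsq, e1, mul_one_div G]
  intro x hx y hy hxy
  rw [key x hx.2, key y hy.2]
  have hx1 : 0 < 1 - x := by linarith [hx.2]
  have hy1 : 0 < 1 - y := by linarith [hy.2]
  have hu : 1 / ((1 - x) ^ 2 * γ ^ 2) < 1 / ((1 - y) ^ 2 * γ ^ 2) := by
    apply one_div_lt_one_div_of_lt (by positivity)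
    have : (1 - y) ^ 2 < (1 - x) ^ 2 := by nlinarith
    exact mul_lt_mul_of_pos_right this (by positivity)
  have hux : 0 < 1 / ((1 - x) ^ 2 * γ ^ 2) := by positivity
  generalize 1 / ((1 - x) ^ 2 * γ ^ 2) = u at hu hux
  generalize 1 / ((1 - y) ^ 2 * γ ^ 2) = v at hu
  generalize (1 - β₂) / β₂ = k at hk
  have hv : 0 < v := hux.trans hu
  rw [div_lt_div_iff₀ (by positivity) (by positivity)]
  have h : 0 < (v - u) * (k * G * N / 2 + (a + k * S ^ 2 / 4) * (k * S ^ 2)) :=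
    mul_pos (by linarith) (by positivity)
  linarith [h, show (a + k * (S ^ 2 / 4 - G * u)) * (1 / 2 * N + k * v * S ^ 2)
    - (a + k * (S ^ 2 / 4 - G * v)) * (1 / 2 * N + k * u * S ^ 2)
    = (v - u) * (k * G * N / 2 + (a + k * S ^ 2 / 4) * (k * S ^ 2)) by ring]
end

section
/- Let β ∈ [0,1), C > 0 with (1-β)C ≤ 1, and set c_t = (1-β)C/t for t ≥ 1. For 1 ≤ t ≤ T define the SF averaging weights α_t := [c_t / ((1-c_t)(1-β) + c_t)] · ∏_{s=t+1}^{T} [(1-c_s)(1-β) / ((1-c_s)(1-β) + c_s)]. Then these weights simplify exactly to α_t = (C/(t + βC)) · ∏_{s=t+1}^{T} (s - (1-β)C)/(s + βC). -/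
/-!
STATEMENT 15: For the refined Schedule-Free method with c_t = (1-β)C/t, the
implicit averaging weights
α_t = [c_t / ((1-c_t)(1-β) + c_t)] · ∏_{s=t+1}^T [(1-c_s)(1-β) / ((1-c_s)(1-β) + c_s)]
simplify exactly to
α_t = (C/(t + βC)) · ∏_{s=t+1}^T (s - (1-β)C)/(s + βC).
-/

theorem refined_sf_weights_closed_form
    (β C : ℝ) (hβ : β ∈ Set.Ico (0 : ℝ) 1) (hC : 0 < C)
    (hCβ : (1 - β) * C ≤ 1)
    (c : ℕ → ℝ) (hc : ∀ t : ℕ, 1 ≤ t → c t = (1 - β) * C / (t : ℝ)) :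
    ∀ T t : ℕ, 1 ≤ t → t ≤ T →
      (c t / ((1 - c t) * (1 - β) + c t)) *
        ∏ s ∈ Finset.Icc (t + 1) T,
          ((1 - c s) * (1 - β) / ((1 - c s) * (1 - β) + c s))
      = (C / ((t : ℝ) + β * C)) *
          ∏ s ∈ Finset.Icc (t + 1) T,
            (((s : ℝ) - (1 - β) * C) / ((s : ℝ) + β * C)) := by
  obtain ⟨hβ0, hβ1⟩ := hβ
  have hb : (1 - β) ≠ 0 := by linarith
  have key : ∀ s : ℕ, 1 ≤ s → (0 : ℝ) < s ∧ (0 : ℝ) < (s : ℝ) + β * C ∧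
      (1 - c s) * (1 - β) + c s = (1 - β) * ((s : ℝ) + β * C) / s := by
    intro s hs
    have h0 : (0 : ℝ) < s := by exact_mod_cast hs
    refine ⟨h0, by positivity, ?_⟩
    rw [hc s hs]
    field_simp
    ring
  intro T t ht _
  congr 1
  · obtain ⟨h0, h1, h2⟩ := key t ht
    have h1' := h1.ne'
    rw [h2, hc t ht]
    field_simp
  · apply Finset.prod_congr rfl
    intro s hs
    have hs1 : 1 ≤ s := by
      have := (Finset.mem_Icc.mp hs).1
      omega
    obtain ⟨h0, h1, h2⟩ := key s hs1
    have h1' := h1.ne'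
    rw [h2, hc s hs1]
    field_simp
end

section
/- Let β ∈ [0,1), C > 0 with (1-β)C ≤ 1, and set c_t = (1-β)C/t for t ≥ 1. For 1 ≤ t ≤ T let α_t := [c_t / ((1-c_t)(1-β) + c_t)] · ∏_{s=t+1}^{T} [(1-c_s)(1-β) / ((1-c_s)(1-β) + c_s)] be the SF averaging weights. Then for every fixed r ∈ (0,1], lim_{T→∞} T · α_{⌈rT⌉} = C · r^{C-1}; that is, the averaging weights asymptotically follow the power-law profile α_t ≈ (C/T)(t/T)^{C-1}, which depends only on the decoupling parameter C and not on β. -/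
open Filter

lemma sf_aux_P (a d : ℝ) (ha : a ≤ 1) (hd : 0 ≤ d) :
    Tendsto (fun n : ℕ => (∏ s ∈ Finset.Ico 2 (n + 1), (((s:ℝ) - a) / (s + d))) *
      ((n:ℝ) - 2) ^ (a + d)) atTop (nhds (Real.Gamma (2 + d) / Real.Gamma (2 - a))) := by
  rw [← tendsto_add_atTop_iff_nat 2]
  have h1 := Real.GammaSeq_tendsto_Gamma (2 + d)
  have h2 := Real.GammaSeq_tendsto_Gamma (2 - a)
  have h3 := h1.div h2 (Real.Gamma_pos_of_pos (by linarith)).ne'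
  refine h3.congr' ?_
  filter_upwards [eventually_ge_atTop 1] with n hn
  have hn' : (0:ℝ) < n := by exact_mod_cast hn
  rw [Finset.prod_Ico_eq_prod_range]
  have e : n + 2 + 1 - 2 = n + 1 := by omega
  rw [e]
  simp only [Pi.div_apply, Real.GammaSeq]
  rw [Finset.prod_div_distrib]
  have p1 : ∏ x ∈ Finset.range (n + 1), (((2 + x : ℕ) : ℝ) - a)
      = ∏ j ∈ Finset.range (n + 1), (2 - a + (j:ℝ)) :=
    Finset.prod_congr rfl fun x _ => by push_cast; ring
  have p2 : ∏ x ∈ Finset.range (n + 1), (((2 + x : ℕ) : ℝ) + d)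
      = ∏ j ∈ Finset.range (n + 1), (2 + d + (j:ℝ)) :=
    Finset.prod_congr rfl fun x _ => by push_cast; ring
  rw [p1, p2]
  have q1 : 0 < ∏ j ∈ Finset.range (n + 1), (2 - a + (j:ℝ)) :=
    Finset.prod_pos fun j _ => by have : (0:ℝ) ≤ j := j.cast_nonneg
                                  linarith
  have q2 : 0 < ∏ j ∈ Finset.range (n + 1), (2 + d + (j:ℝ)) :=
    Finset.prod_pos fun j _ => by have : (0:ℝ) ≤ j := j.cast_nonneg
                                  linarith
  have e2 : ((n + 2 : ℕ) : ℝ) - 2 = n := by push_cast; ring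
  have e3 : (n:ℝ) ^ (2 + d) = (n:ℝ) ^ (2 - a) * (n:ℝ) ^ (a + d) := by
    rw [← Real.rpow_add hn']; congr 1; ring
  have q3 : 0 < (n:ℝ) ^ (2 - a) := Real.rpow_pos_of_pos hn' _
  have q4 : (0:ℝ) < n.factorial := by exact_mod_cast n.factorial_pos
  rw [e2, e3]
  field_simp

theorem refined_sf_weights_power_law_limit
    (β C : ℝ) (hβ : β ∈ Set.Ico (0 : ℝ) 1) (hC : 0 < C)
    (hCβ : (1 - β) * C ≤ 1)
    (c : ℕ → ℝ) (hc : ∀ t : ℕ, 1 ≤ t → c t = (1 - β) * C / (t : ℝ))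
    (α : ℕ → ℕ → ℝ)
    (hα : ∀ T t : ℕ, α T t =
      (c t / ((1 - c t) * (1 - β) + c t)) *
        ∏ s ∈ Finset.Icc (t + 1) T,
          ((1 - c s) * (1 - β) / ((1 - c s) * (1 - β) + c s))) :
    ∀ r : ℝ, r ∈ Set.Ioc (0 : ℝ) 1 →
      Tendsto (fun T : ℕ => (T : ℝ) * α T ⌈r * (T : ℝ)⌉₊) atTop
        (nhds (C * r ^ (C - 1))) := by
  intro r hr
  obtain ⟨hr0, hr1⟩ := hr
  obtain ⟨hβ0, hβ1⟩ := hβ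
  have hb : 0 < 1 - β := by linarith
  have hd : 0 ≤ β * C := by positivity
  have hP := sf_aux_P ((1 - β) * C) (β * C) hCβ hd
  have hsum : (1 - β) * C + β * C = C := by ring
  rw [hsum] at hP
  set L := Real.Gamma (2 + β * C) / Real.Gamma (2 - (1 - β) * C) with hL
  have hLpos : 0 < L := div_pos (Real.Gamma_pos_of_pos (by linarith))
    (Real.Gamma_pos_of_pos (by linarith))
  set f : ℕ → ℝ := fun s => ((s:ℝ) - (1 - β) * C) / (s + β * C) with hf
  have hfpos : ∀ s : ℕ, 2 ≤ s → 0 < f s := by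
    intro s hs
    have : (2:ℝ) ≤ s := by exact_mod_cast hs
    exact div_pos (by linarith) (by linarith)
  have hden : ∀ s : ℕ, 1 ≤ s → (1 - c s) * (1 - β) + c s = (1 - β) * (s + β * C) / s := by
    intro s hs
    have : (0:ℝ) < s := by exact_mod_cast hs
    rw [hc s hs]; field_simp; ring
  have hfac : ∀ s : ℕ, 1 ≤ s →
      (1 - c s) * (1 - β) / ((1 - c s) * (1 - β) + c s) = f s := by
    intro s hs
    have h0 : (0:ℝ) < s := by exact_mod_cast hs
    have h1 : 0 < (s:ℝ) + β * C := by linarith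
    rw [hden s hs, hc s hs, hf]; field_simp
  have hlead : ∀ s : ℕ, 1 ≤ s →
      c s / ((1 - c s) * (1 - β) + c s) = C / (s + β * C) := by
    intro s hs
    have h0 : (0:ℝ) < s := by exact_mod_cast hs
    have h1 : 0 < (s:ℝ) + β * C := by linarith
    rw [hden s hs, hc s hs]; field_simp
  set t : ℕ → ℕ := fun T => ⌈r * (T : ℝ)⌉₊ with ht
  have htT : ∀ T, t T ≤ T := by
    intro T
    apply Nat.ceil_le.2
    have : (0:ℝ) ≤ T := T.cast_nonneg
    nlinarith
  have htop : Tendsto t atTop atTop :=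
    tendsto_nat_ceil_atTop.comp (tendsto_natCast_atTop_atTop.const_mul_atTop hr0)
  have hratio : Tendsto (fun T : ℕ => (t T : ℝ) / T) atTop (nhds r) :=
    (tendsto_nat_ceil_mul_div_atTop hr0.le).comp tendsto_natCast_atTop_atTop
  have hinv : ∀ k : ℝ, Tendsto (fun T : ℕ => k / (T:ℝ)) atTop (nhds 0) :=
    fun k => tendsto_const_div_atTop_nhds_zero_nat k
  have hA : Tendsto (fun T : ℕ => C / ((t T : ℝ) / T + β * C / T)) atTop (nhds (C / r)) := by
    have := (tendsto_const_nhds (x := C)).div (hratio.add (hinv (β * C)))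
      (by simpa using hr0.ne')
    rw [add_zero] at this
    exact this
  have hB : Tendsto (fun T : ℕ => (((t T : ℝ) / T - 2 / T) / (1 - 2 / T)) ^ C) atTop
      (nhds (r ^ C)) := by
    have h1 := (hratio.sub (hinv 2)).div ((tendsto_const_nhds (x := (1:ℝ))).sub (hinv 2))
      (by simp)
    have h2 := h1.rpow_const (p := C) (Or.inr hC.le)
    simpa using h2
  have hF := (hP.div (hP.comp htop) hLpos.ne')
  have hall := (hA.mul hF).mul hB
  have hlim : C / r * (L / L) * r ^ C = C * r ^ (C - 1) := by
    rw [div_self hLpos.ne', Real.rpow_sub_one hr0.ne']; ring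
  rw [hlim] at hall
  refine hall.congr' ?_
  filter_upwards [eventually_ge_atTop 3, htop.eventually_ge_atTop 3] with T hT htT3
  change _ = (T:ℝ) * α T (t T)
  have hT' : (3:ℝ) ≤ T := by exact_mod_cast hT
  have ht' : (3:ℝ) ≤ t T := by exact_mod_cast htT3
  rw [hα, hlead _ (by omega)]
  have hprod : ∏ s ∈ Finset.Icc (t T + 1) T,
      ((1 - c s) * (1 - β) / ((1 - c s) * (1 - β) + c s))
      = ∏ s ∈ Finset.Ico (t T + 1) (T + 1), f s := by
    refine Finset.prod_congr (by ext; simp) fun s hs => hfac s ?_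
    simp at hs; omega
  rw [hprod]
  have hcons := Finset.prod_Ico_consecutive f (m := 2) (n := t T + 1) (k := T + 1)
    (by omega) (by have := htT T; omega)
  have hPt : 0 < ∏ s ∈ Finset.Ico 2 (t T + 1), f s :=
    Finset.prod_pos fun s hs => hfpos s (by simp at hs; omega)
  simp only [Pi.div_apply, Function.comp]
  change C / ((t T : ℝ) / T + β * C / T) *
    ((∏ s ∈ Finset.Ico 2 (T + 1), f s) * ((T:ℝ) - 2) ^ C /
      ((∏ s ∈ Finset.Ico 2 (t T + 1), f s) * ((t T:ℝ) - 2) ^ C)) * _ = _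
  rw [← hcons]
  have e1 : ((t T : ℝ) / T - 2 / T) / (1 - 2 / T) = ((t T:ℝ) - 2) / ((T:ℝ) - 2) := by
    have : (T:ℝ) - 2 ≠ 0 := by linarith
    have : (T:ℝ) ≠ 0 := by linarith
    field_simp
  have e2 : C / ((t T : ℝ) / T + β * C / T) = T * (C / (t T + β * C)) := by
    have : (T:ℝ) ≠ 0 := by linarith
    have : (t T:ℝ) + β * C ≠ 0 := by linarith
    field_simp
  rw [e1, e2, Real.div_rpow (by linarith) (by linarith)]
  have g1 : 0 < ((t T:ℝ) - 2) ^ C := Real.rpow_pos_of_pos (by linarith) _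
  have g2 : 0 < ((T:ℝ) - 2) ^ C := Real.rpow_pos_of_pos (by linarith) _
  have g3 : 0 < (t T:ℝ) + β * C := by linarith
  generalize ((t T:ℝ) - 2) ^ C = u at *
  generalize ((T:ℝ) - 2) ^ C = v at *
  generalize (∏ s ∈ Finset.Ico 2 (t T + 1), f s) = p at *
  field_simp
end
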